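/- arXiv:0907.5230 — 2 statements merged into one kernel-verified Lean document; each statement's English description precedes it below -/
import Mathlib

section
/- Let H₀ > 0, let T : (0, H₀] → ℝ be continuous with T₀ ≤ T(h) ≤ T₁ (1 + |log h|) for all h ∈ (0, H₀], where T₀, T₁ > 0, and let p : [0, H₀) → ℝ be continuous and positive with c₁ (H₀ − h) ≤ p(h) ≤ c₂ (H₀ − h) for all h ∈ [H₀/2, H₀), where c₁, c₂ > 0. Then there exists λ̄* ∈ (0, ∞) such that: for every λ ∈ [0, λ̄*) there exists a bounded nonnegative function φ̄ on [0, H₀), C¹ on (0, H₀) with p φ̄' differentiable there, satisfying −(d/dh)(p(h) φ̄'(h)) = λ T(h) g(φ̄(h)) on (0, H₀), φ̄(0) = 0, φ̄ > 0 on (0,H₀) when λ > 0, and φ̄' bounded on (0, H₀); and for every λ > λ̄* no such positive solution exists. -/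
open Set MeasureTheory

noncomputable section

/-- A solution of the effective Freidlin problem
`-(p φ')' = λ T g(φ)` on `(0, H₀)` with `φ(0) = 0`, `φ` bounded and nonnegative on
`[0, H₀)`, `φ` of class `C¹` on `(0, H₀)` with `p φ'` differentiable there, and `φ'`
bounded on `(0, H₀)`. -/
def IsFreidlinSol (H₀ : ℝ) (T p g : ℝ → ℝ) (lam : ℝ) (φ : ℝ → ℝ) : Prop :=
  (∃ M : ℝ, ∀ h ∈ Ico (0 : ℝ) H₀, |φ h| ≤ M) ∧
  (∀ h ∈ Ico (0 : ℝ) H₀, 0 ≤ φ h) ∧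
  (∀ h ∈ Ioo (0 : ℝ) H₀, DifferentiableAt ℝ φ h) ∧
  (∀ h ∈ Ioo (0 : ℝ) H₀, ContinuousAt (deriv φ) h) ∧
  (∀ h ∈ Ioo (0 : ℝ) H₀, DifferentiableAt ℝ (fun t => p t * deriv φ t) h) ∧
  (∀ h ∈ Ioo (0 : ℝ) H₀, -deriv (fun t => p t * deriv φ t) h = lam * T h * g (φ h)) ∧
  φ 0 = 0 ∧
  (∃ K : ℝ, ∀ h ∈ Ioo (0 : ℝ) H₀, |deriv φ h| ≤ K)

structure FCore (H T₀ C : ℝ) (T p g : ℝ → ℝ) : Prop where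
  hH : 0 < H
  hT₀ : 0 < T₀
  hI : IntegrableOn T (Ioo 0 H)
  hTc : ContinuousOn T (Ioo 0 H)
  hTl : ∀ h ∈ Ioo (0:ℝ) H, T₀ ≤ T h
  hpc : ContinuousOn p (Ioo 0 H)
  hpp : ∀ h ∈ Ioo (0:ℝ) H, 0 < p h
  hC : ∀ s ∈ Ioo (0:ℝ) H, (∫ t in s..H, T t) ≤ C * p s
  hgc : Continuous g
  hgm : MonotoneOn g (Ici 0)
  hg0 : 0 < g 0
  hpz : Filter.Tendsto p (nhdsWithin H (Iio H)) (nhds 0)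

def FA (H : ℝ) (T g f : ℝ → ℝ) (s : ℝ) : ℝ := ∫ t in s..H, T t * g (f t)

def FF (H : ℝ) (T p g : ℝ → ℝ) (lam : ℝ) (f : ℝ → ℝ) (h : ℝ) : ℝ :=
  ∫ s in (0:ℝ)..h, lam * FA H T g f s / p s

def FAdm (H M : ℝ) (f : ℝ → ℝ) : Prop :=
  AEStronglyMeasurable f (volume.restrict (Ioo 0 H)) ∧ ∀ h ∈ Ioo (0:ℝ) H, 0 ≤ f h ∧ f h ≤ M

section core
open Filter Topology

theorem ii_of_Ioo {H a b : ℝ} {f : ℝ → ℝ} (hf : IntegrableOn f (Ioo 0 H))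
    (ha : a ∈ Icc 0 H) (hb : b ∈ Icc 0 H) : IntervalIntegrable f volume a b := by
  have h1 : IntegrableOn f (Icc 0 H) := by
    rw [integrableOn_Icc_iff_integrableOn_Ioo]; exact hf
  exact (h1.mono_set (uIcc_subset_Icc ha hb)).intervalIntegrable

variable {H T₀ C : ℝ} {T p g : ℝ → ℝ}

theorem FCore.g_le (K : FCore H T₀ C T p g) {M : ℝ} {f : ℝ → ℝ} (hf : FAdm H M f) {t : ℝ}
    (ht : t ∈ Ioo 0 H) : g 0 ≤ g (f t) ∧ g (f t) ≤ g M := by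
  obtain ⟨h0, h1⟩ := hf.2 t ht
  exact ⟨K.hgm (by simp) h0 h0, K.hgm h0 (h0.trans h1) h1⟩

theorem FCore.T_pos (K : FCore H T₀ C T p g) {t : ℝ} (ht : t ∈ Ioo 0 H) : 0 < T t :=
  K.hT₀.trans_le (K.hTl t ht)

theorem FCore.meas (K : FCore H T₀ C T p g) {M : ℝ} {f : ℝ → ℝ} (hf : FAdm H M f) :
    AEStronglyMeasurable (fun t => T t * g (f t)) (volume.restrict (Ioo 0 H)) :=
  K.hI.1.mul (K.hgc.comp_aestronglyMeasurable hf.1)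

theorem FCore.bd (K : FCore H T₀ C T p g) {M : ℝ} {f : ℝ → ℝ} (hf : FAdm H M f) {t : ℝ}
    (ht : t ∈ Ioo 0 H) : ‖T t * g (f t)‖ ≤ g M * T t := by
  have h1 := K.g_le hf ht
  have h2 := K.T_pos ht
  have h3 := K.hg0
  rw [Real.norm_of_nonneg (mul_nonneg h2.le (by linarith))]
  nlinarith [h1.2]

theorem FCore.integ (K : FCore H T₀ C T p g) {M : ℝ} {f : ℝ → ℝ} (hf : FAdm H M f) :
    IntegrableOn (fun t => T t * g (f t)) (Ioo 0 H) := by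
  refine Integrable.mono' (g := fun t => g M * T t) (K.hI.const_mul _) (K.meas hf) ?_
  filter_upwards [ae_restrict_mem measurableSet_Ioo] with t ht using K.bd hf ht

theorem FCore.FA_ge (K : FCore H T₀ C T p g) {M : ℝ} {f : ℝ → ℝ} (hf : FAdm H M f) {s c : ℝ}
    (hs : s ∈ Ioo 0 H) (hc : 0 ≤ c) (h : ∀ t ∈ Ioo s H, c ≤ g (f t)) :
    T₀ * c * (H - s) ≤ FA H T g f s := by
  have := intervalIntegral.integral_mono_on_of_le_Ioo (μ := volume) (f := fun _ => T₀ * c)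
    (g := fun t => T t * g (f t)) hs.2.le (by simp)
    (ii_of_Ioo (K.integ hf) (Ioo_subset_Icc_self hs) ⟨K.hH.le, le_rfl⟩) (by
      intro t ht
      have ht' : t ∈ Ioo 0 H := ⟨hs.1.trans ht.1, ht.2⟩
      exact mul_le_mul (K.hTl t ht') (h t ht) hc (K.T_pos ht').le)
  simp only [intervalIntegral.integral_const, smul_eq_mul] at this
  unfold FA
  linarith

theorem FCore.FA_pos (K : FCore H T₀ C T p g) {M : ℝ} {f : ℝ → ℝ} (hf : FAdm H M f) {s : ℝ}
    (hs : s ∈ Ioo 0 H) : 0 < FA H T g f s := by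
  refine lt_of_lt_of_le ?_ (K.FA_ge hf hs K.hg0.le
    (fun t ht => (K.g_le hf ⟨hs.1.trans ht.1, ht.2⟩).1))
  have := K.hT₀
  have := K.hg0
  have : 0 < H - s := by linarith [hs.2]
  positivity

theorem FCore.FA_mono (K : FCore H T₀ C T p g) {M M' : ℝ} {f f' : ℝ → ℝ} (hf : FAdm H M f)
    (hf' : FAdm H M' f') (hle : ∀ t ∈ Ioo 0 H, f t ≤ f' t) {s : ℝ}
    (hs : s ∈ Ioo 0 H) : FA H T g f s ≤ FA H T g f' s := by
  refine intervalIntegral.integral_mono_on_of_le_Ioo hs.2.le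
    (ii_of_Ioo (K.integ hf) (Ioo_subset_Icc_self hs) ⟨K.hH.le, le_rfl⟩)
    (ii_of_Ioo (K.integ hf') (Ioo_subset_Icc_self hs) ⟨K.hH.le, le_rfl⟩) ?_
  intro t ht
  have ht' : t ∈ Ioo 0 H := ⟨hs.1.trans ht.1, ht.2⟩
  exact mul_le_mul_of_nonneg_left
    (K.hgm (hf.2 t ht').1 (hf'.2 t ht').1 (hle t ht')) (K.T_pos ht').le

theorem FCore.gM (K : FCore H T₀ C T p g) {M : ℝ} {f : ℝ → ℝ} (hf : FAdm H M f) : 0 < g M := by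
  have : H / 2 ∈ Ioo 0 H := ⟨by linarith [K.hH], by linarith [K.hH]⟩
  have h := K.g_le hf this
  linarith [K.hg0]

theorem FCore.FA_le (K : FCore H T₀ C T p g) {M : ℝ} {f : ℝ → ℝ} (hf : FAdm H M f) {s : ℝ}
    (hs : s ∈ Ioo 0 H) : FA H T g f s ≤ g M * C * p s := by
  have h1 : FA H T g f s ≤ ∫ t in s..H, g M * T t := by
    refine intervalIntegral.integral_mono_on_of_le_Ioo hs.2.le
      (ii_of_Ioo (K.integ hf) (Ioo_subset_Icc_self hs) ⟨K.hH.le, le_rfl⟩)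
      (ii_of_Ioo (K.hI.const_mul _) (Ioo_subset_Icc_self hs) ⟨K.hH.le, le_rfl⟩) ?_
    intro t ht
    exact (le_abs_self _).trans (K.bd hf ⟨hs.1.trans ht.1, ht.2⟩)
  rw [intervalIntegral.integral_const_mul] at h1
  have := mul_le_mul_of_nonneg_left (K.hC s hs) (K.gM hf).le
  linarith

theorem FCore.FA_cont (K : FCore H T₀ C T p g) {M : ℝ} {f : ℝ → ℝ} (hf : FAdm H M f) :
    ContinuousOn (FA H T g f) (Icc 0 H) := by
  have h1 : IntegrableOn (fun t => T t * g (f t)) (uIcc 0 H) := by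
    rw [uIcc_of_le K.hH.le, integrableOn_Icc_iff_integrableOn_Ioo]; exact K.integ hf
  have := intervalIntegral.continuousOn_primitive_interval_left h1
  rwa [uIcc_of_le K.hH.le] at this

theorem FCore.K_cont (K : FCore H T₀ C T p g) {M : ℝ} {f : ℝ → ℝ} (hf : FAdm H M f) (lam : ℝ) :
    ContinuousOn (fun s => lam * FA H T g f s / p s) (Ioo 0 H) :=
  (continuousOn_const.mul ((K.FA_cont hf).mono Ioo_subset_Icc_self)).div K.hpc
    (fun s hs => (K.hpp s hs).ne')

theorem FCore.K_nonneg (K : FCore H T₀ C T p g) {M : ℝ} {f : ℝ → ℝ} (hf : FAdm H M f) {lam : ℝ}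
    (hl : 0 ≤ lam) {s : ℝ} (hs : s ∈ Ioo 0 H) : 0 ≤ lam * FA H T g f s / p s :=
  div_nonneg (mul_nonneg hl (K.FA_pos hf hs).le) (K.hpp s hs).le

theorem FCore.K_le (K : FCore H T₀ C T p g) {M : ℝ} {f : ℝ → ℝ} (hf : FAdm H M f) {lam : ℝ}
    (hl : 0 ≤ lam) {s : ℝ} (hs : s ∈ Ioo 0 H) :
    lam * FA H T g f s / p s ≤ lam * (g M * C) := by
  rw [div_le_iff₀ (K.hpp s hs), mul_assoc]
  exact mul_le_mul_of_nonneg_left (K.FA_le hf hs) hl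

theorem FCore.K_int (K : FCore H T₀ C T p g) {M : ℝ} {f : ℝ → ℝ} (hf : FAdm H M f) {lam : ℝ}
    (hl : 0 ≤ lam) : IntegrableOn (fun s => lam * FA H T g f s / p s) (Ioo 0 H) := by
  refine Integrable.mono' (g := fun t => lam * (g M * C)) ?_
    ((K.K_cont hf lam).aestronglyMeasurable measurableSet_Ioo) ?_
  · exact integrableOn_const (by simp)
  · filter_upwards [ae_restrict_mem measurableSet_Ioo] with t ht
    rw [Real.norm_of_nonneg (K.K_nonneg hf hl ht)]
    exact K.K_le hf hl ht

theorem FCore.FF_nonneg (K : FCore H T₀ C T p g) {M : ℝ} {f : ℝ → ℝ} (hf : FAdm H M f) {lam : ℝ}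
    (hl : 0 ≤ lam) {h : ℝ} (hh : h ∈ Ico 0 H) : 0 ≤ FF H T p g lam f h := by
  unfold FF
  rw [intervalIntegral.integral_of_le hh.1]
  refine setIntegral_nonneg measurableSet_Ioc fun s hs => ?_
  exact K.K_nonneg hf hl ⟨hs.1, hs.2.trans_lt hh.2⟩

theorem FCore.FF_mono (K : FCore H T₀ C T p g) {M M' : ℝ} {f f' : ℝ → ℝ} (hf : FAdm H M f)
    (hf' : FAdm H M' f') (hle : ∀ t ∈ Ioo 0 H, f t ≤ f' t) {lam : ℝ} (hl : 0 ≤ lam) {h : ℝ}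
    (hh : h ∈ Ioo 0 H) : FF H T p g lam f h ≤ FF H T p g lam f' h := by
  refine intervalIntegral.integral_mono_on_of_le_Ioo hh.1.le
    (ii_of_Ioo (K.K_int hf hl) ⟨le_rfl, K.hH.le⟩ (Ioo_subset_Icc_self hh))
    (ii_of_Ioo (K.K_int hf' hl) ⟨le_rfl, K.hH.le⟩ (Ioo_subset_Icc_self hh)) ?_
  intro s hs
  have hs' : s ∈ Ioo 0 H := ⟨hs.1, hs.2.trans hh.2⟩
  have := K.hpp s hs'
  have := K.FA_mono hf hf' hle hs'
  gcongr

theorem FCore.FF_cont (K : FCore H T₀ C T p g) {M : ℝ} {f : ℝ → ℝ} (hf : FAdm H M f) {lam : ℝ}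
    (hl : 0 ≤ lam) : ContinuousOn (FF H T p g lam f) (Icc 0 H) := by
  have h1 : IntegrableOn (fun s => lam * FA H T g f s / p s) (uIcc 0 H) := by
    rw [uIcc_of_le K.hH.le, integrableOn_Icc_iff_integrableOn_Ioo]; exact K.K_int hf hl
  have := intervalIntegral.continuousOn_primitive_interval h1
  rwa [uIcc_of_le K.hH.le] at this

/-- existence of a fixed point below a supersolution -/
theorem FCore.fixed (K : FCore H T₀ C T p g) {M : ℝ} {ψ : ℝ → ℝ} (hψ : FAdm H M ψ) {lam : ℝ}
    (hl : 0 ≤ lam) (hsup : ∀ h ∈ Ioo 0 H, FF H T p g lam ψ h ≤ ψ h) :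
    ∃ f, FAdm H M f ∧ ∀ h ∈ Ioo 0 H, f h = FF H T p g lam f h := by
  let u : ℕ → ℝ → ℝ := fun n => (FF H T p g lam)^[n] (fun _ => 0)
  have hu : ∀ n, u (n+1) = FF H T p g lam (u n) := fun n => Function.iterate_succ_apply' _ _ _
  have hA : ∀ n, FAdm H M (u n) ∧ ∀ h ∈ Ioo 0 H, u n h ≤ ψ h := by
    intro n
    induction n with
    | zero =>
      refine ⟨⟨aestronglyMeasurable_const, fun h hh => ⟨le_rfl, ?_⟩⟩, fun h hh => (hψ.2 h hh).1⟩
      exact (hψ.2 h hh).1.trans (hψ.2 h hh).2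
    | succ n ih =>
      have h1 : ∀ h ∈ Ioo 0 H, u (n+1) h ≤ ψ h := by
        intro h hh
        rw [hu]
        exact (K.FF_mono ih.1 hψ ih.2 hl hh).trans (hsup h hh)
      refine ⟨⟨?_, fun h hh => ⟨?_, (h1 h hh).trans (hψ.2 h hh).2⟩⟩, h1⟩
      · rw [hu]
        exact ((K.FF_cont ih.1 hl).mono Ioo_subset_Icc_self).aestronglyMeasurable measurableSet_Ioo
      · rw [hu]
        exact K.FF_nonneg ih.1 hl (Ioo_subset_Ico_self hh)
  have hmono : ∀ n, ∀ h ∈ Ioo 0 H, u n h ≤ u (n+1) h := by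
    intro n
    induction n with
    | zero => intro h hh; exact ((hA 1).1.2 h hh).1
    | succ n ih =>
      intro h hh
      rw [hu (n+1)]
      nth_rw 1 [hu n]
      exact K.FF_mono (hA n).1 (hA (n+1)).1 ih hl hh
  let f : ℝ → ℝ := fun h => ⨆ n, u n h
  have hlim : ∀ h ∈ Ioo 0 H, Tendsto (fun n => u n h) atTop (𝓝 (f h)) := by
    intro h hh
    refine tendsto_atTop_ciSup (monotone_nat_of_le_succ fun n => hmono n h hh) ⟨M, ?_⟩
    rintro _ ⟨n, rfl⟩
    exact ((hA n).1.2 h hh).2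
  have hf : FAdm H M f := by
    refine ⟨aestronglyMeasurable_of_tendsto_ae atTop (fun n => (hA n).1.1) ?_, fun h hh => ⟨?_, ?_⟩⟩
    · filter_upwards [ae_restrict_mem measurableSet_Ioo] with t ht using hlim t ht
    · exact ge_of_tendsto' (hlim h hh) fun n => ((hA n).1.2 h hh).1
    · exact le_of_tendsto' (hlim h hh) fun n => ((hA n).1.2 h hh).2
  have hne : ∀ᵐ x : ℝ, x ≠ H := by
    simp [ae_iff]
  have hFA : ∀ s ∈ Ioo 0 H, Tendsto (fun n => FA H T g (u n) s) atTop (𝓝 (FA H T g f s)) := by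
    intro s hs
    have hsub : ∀ x, x ≠ H → x ∈ uIoc s H → x ∈ Ioo 0 H := by
      intro x hx hx'
      rw [uIoc_of_le hs.2.le] at hx'
      exact ⟨hs.1.trans hx'.1, lt_of_le_of_ne hx'.2 hx⟩
    refine intervalIntegral.tendsto_integral_filter_of_dominated_convergence
      (fun t => g M * T t) ?_ ?_ ?_ ?_
    · refine Eventually.of_forall fun n => ?_
      exact (ii_of_Ioo (K.integ (hA n).1) (Ioo_subset_Icc_self hs)
        ⟨K.hH.le, le_rfl⟩).def'.aestronglyMeasurable
    · refine Eventually.of_forall fun n => ?_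
      filter_upwards [hne] with x hx hx' using K.bd (hA n).1 (hsub x hx hx')
    · exact ii_of_Ioo (K.hI.const_mul _) (Ioo_subset_Icc_self hs) ⟨K.hH.le, le_rfl⟩
    · filter_upwards [hne] with x hx hx'
      exact ((K.hgc.tendsto _).comp (hlim x (hsub x hx hx'))).const_mul _
  refine ⟨f, hf, fun h hh => ?_⟩
  have hsub : ∀ x, x ∈ uIoc 0 h → x ∈ Ioo 0 H := by
    intro x hx'
    rw [uIoc_of_le hh.1.le] at hx'
    exact ⟨hx'.1, hx'.2.trans_lt hh.2⟩
  have hFF : Tendsto (fun n => FF H T p g lam (u n) h) atTop (𝓝 (FF H T p g lam f h)) := by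
    refine intervalIntegral.tendsto_integral_filter_of_dominated_convergence
      (fun t => lam * (g M * C)) ?_ ?_ ?_ ?_
    · refine Eventually.of_forall fun n => ?_
      exact (ii_of_Ioo (K.K_int (hA n).1 hl) ⟨le_rfl, K.hH.le⟩
        (Ioo_subset_Icc_self hh)).def'.aestronglyMeasurable
    · refine Eventually.of_forall fun n => Eventually.of_forall fun x hx => ?_
      rw [Real.norm_of_nonneg (K.K_nonneg (hA n).1 hl (hsub x hx))]
      exact K.K_le (hA n).1 hl (hsub x hx)
    · simp
    · refine Eventually.of_forall fun x hx => ?_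
      exact ((hFA x (hsub x hx)).const_mul _).div_const _
  have h2 := (tendsto_add_atTop_iff_nat 1).2 (hlim h hh)
  simp only [hu] at h2
  exact tendsto_nhds_unique h2 hFF

/-- A fixed point yields a solution. -/
theorem FCore.sol (K : FCore H T₀ C T p g) {M : ℝ} {f : ℝ → ℝ} (hf : FAdm H M f) {lam : ℝ}
    (hl : 0 ≤ lam) (hfix : ∀ h ∈ Ioo 0 H, f h = FF H T p g lam f h) :
    IsFreidlinSol H T p g lam (FF H T p g lam f) ∧
      (0 < lam → ∀ h ∈ Ioo (0 : ℝ) H, 0 < FF H T p g lam f h) := by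
  have hd : ∀ h ∈ Ioo 0 H, HasDerivAt (FF H T p g lam f) (lam * FA H T g f h / p h) h := by
    intro h hh
    have hnb : Ioo 0 H ∈ 𝓝 h := isOpen_Ioo.mem_nhds hh
    refine intervalIntegral.integral_hasDerivAt_right
      (ii_of_Ioo (K.K_int hf hl) ⟨le_rfl, K.hH.le⟩ (Ioo_subset_Icc_self hh)) ?_ ?_
    · exact (K.K_cont hf lam).stronglyMeasurableAtFilter isOpen_Ioo h hh
    · exact (K.K_cont hf lam).continuousAt hnb
  have hev : ∀ h ∈ Ioo 0 H, deriv (FF H T p g lam f) =ᶠ[𝓝 h]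
      fun s => lam * FA H T g f s / p s := by
    intro h hh
    filter_upwards [isOpen_Ioo.mem_nhds hh] with s hs using (hd s hs).deriv
  have hfc : ContinuousOn f (Ioo 0 H) :=
    ((K.FF_cont hf hl).mono Ioo_subset_Icc_self).congr hfix
  have hic : ContinuousOn (fun t => T t * g (f t)) (Ioo 0 H) :=
    K.hTc.mul (K.hgc.comp_continuousOn hfc)
  have hd2 : ∀ h ∈ Ioo 0 H, HasDerivAt (fun t => p t * deriv (FF H T p g lam f) t)
      (lam * -(T h * g (f h))) h := by
    intro h hh
    have hnb : Ioo 0 H ∈ 𝓝 h := isOpen_Ioo.mem_nhds hh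
    have h1 : HasDerivAt (FA H T g f) (-(T h * g (f h))) h :=
      intervalIntegral.integral_hasDerivAt_left
        (ii_of_Ioo (K.integ hf) (Ioo_subset_Icc_self hh) ⟨K.hH.le, le_rfl⟩)
        (hic.stronglyMeasurableAtFilter isOpen_Ioo h hh) (hic.continuousAt hnb)
    refine (h1.const_mul lam).congr_of_eventuallyEq ?_
    filter_upwards [hnb] with s hs
    rw [(hd s hs).deriv]
    have := (K.hpp s hs).ne'
    field_simp
  refine ⟨⟨?_, ?_, ?_, ?_, ?_, ?_, ?_, ?_⟩, ?_⟩
  · refine ⟨max M 0, fun h hh => ?_⟩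
    rw [abs_of_nonneg (K.FF_nonneg hf hl hh)]
    rcases eq_or_lt_of_le hh.1 with h0 | h0
    · rw [← h0]; simp [FF]
    · rw [← hfix h ⟨h0, hh.2⟩]
      exact (hf.2 h ⟨h0, hh.2⟩).2.trans (le_max_left _ _)
  · exact fun h hh => K.FF_nonneg hf hl hh
  · exact fun h hh => (hd h hh).differentiableAt
  · intro h hh
    refine ContinuousAt.congr ?_ (hev h hh).symm
    exact (K.K_cont hf lam).continuousAt (isOpen_Ioo.mem_nhds hh)
  · exact fun h hh => (hd2 h hh).differentiableAt
  · intro h hh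
    rw [(hd2 h hh).deriv, ← hfix h hh]; ring
  · simp [FF]
  · refine ⟨lam * (g M * C), fun h hh => ?_⟩
    rw [(hd h hh).deriv, abs_of_nonneg (K.K_nonneg hf hl hh)]
    exact K.K_le hf hl hh
  · intro hlp h hh
    refine intervalIntegral.intervalIntegral_pos_of_pos_on
      (ii_of_Ioo (K.K_int hf hl) ⟨le_rfl, K.hH.le⟩ (Ioo_subset_Icc_self hh)) ?_ hh.1
    intro s hs
    have hs' : s ∈ Ioo 0 H := ⟨hs.1, hs.2.trans hh.2⟩
    exact div_pos (mul_pos hlp (K.FA_pos hf hs')) (K.hpp s hs')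

/-- Converse: a solution is admissible, with the flux identity. -/
theorem FCore.conv (K : FCore H T₀ C T p g) {ψ : ℝ → ℝ} {lam : ℝ}
    (hs : IsFreidlinSol H T p g lam ψ) :
    ∃ M, FAdm H M ψ ∧ ∀ h ∈ Ioo 0 H, p h * deriv ψ h = lam * FA H T g ψ h := by
  obtain ⟨⟨M, hM⟩, hnn, hdiff, hdc, hpd, heq, h0, ⟨B, hB⟩⟩ := hs
  have hc : ContinuousOn ψ (Ioo 0 H) := fun h hh => (hdiff h hh).continuousAt.continuousWithinAt
  have hA : FAdm H M ψ := ⟨hc.aestronglyMeasurable measurableSet_Ioo, fun h hh =>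
    ⟨hnn h (Ioo_subset_Ico_self hh), (le_abs_self _).trans (hM h (Ioo_subset_Ico_self hh))⟩⟩
  refine ⟨M, hA, fun h hh => ?_⟩
  have hlimH : Tendsto (fun t => p t * deriv ψ t) (𝓝[<] H) (𝓝 0) := by
    have h1 : Tendsto (fun t => |p t| * B) (𝓝[<] H) (𝓝 0) := by
      simpa using (K.hpz.abs).mul_const B
    refine squeeze_zero_norm' ?_ h1
    filter_upwards [Ioo_mem_nhdsLT K.hH] with t ht
    rw [Real.norm_eq_abs, abs_mul]
    exact mul_le_mul_of_nonneg_left (hB t ht) (abs_nonneg _)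
  have hlimh : Tendsto (fun t => p t * deriv ψ t) (𝓝[>] h) (𝓝 (p h * deriv ψ h)) :=
    (hpd h hh).continuousAt.tendsto.mono_left nhdsWithin_le_nhds
  have := intervalIntegral.integral_eq_sub_of_hasDerivAt_of_tendsto hh.2
    (f := fun t => p t * deriv ψ t) (f' := fun t => -(lam * (T t * g (ψ t))))
    (fun t ht => by
      have ht' : t ∈ Ioo 0 H := ⟨hh.1.trans ht.1, ht.2⟩
      have h1 := (hpd t ht').hasDerivAt
      have h2 : deriv (fun t => p t * deriv ψ t) t = -(lam * (T t * g (ψ t))) := by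
        linarith [heq t ht']
      rwa [h2] at h1)
    ((ii_of_Ioo (K.integ hA) (Ioo_subset_Icc_self hh) ⟨K.hH.le, le_rfl⟩).const_mul lam).neg
    hlimh hlimH
  rw [intervalIntegral.integral_neg, intervalIntegral.integral_const_mul] at this
  unfold FA
  linarith

/-- a solution for a larger parameter is a supersolution -/
theorem FCore.super (K : FCore H T₀ C T p g) {ψ : ℝ → ℝ} {lam lam' : ℝ} (hl : 0 ≤ lam)
    (hll : lam ≤ lam') (hs : IsFreidlinSol H T p g lam' ψ) :
    ∃ M, FAdm H M ψ ∧ ∀ h ∈ Ioo 0 H, FF H T p g lam ψ h ≤ ψ h := by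
  obtain ⟨M, hA, hfl⟩ := K.conv hs
  refine ⟨M, hA, fun h hh => ?_⟩
  have hdiff := hs.2.2.1
  have hint := K.K_int hA hl
  have hint' := K.K_int hA (hl.trans hll)
  have key : ∀ a ∈ Ioo 0 h, ∫ s in a..h, lam * FA H T g ψ s / p s ≤ ψ h := by
    intro a ha
    have ha' : a ∈ Ioo 0 H := ⟨ha.1, ha.2.trans hh.2⟩
    have h1 : ∫ s in a..h, lam' * FA H T g ψ s / p s = ψ h - ψ a := by
      refine intervalIntegral.integral_eq_sub_of_hasDerivAt ?_
        (ii_of_Ioo hint' (Ioo_subset_Icc_self ha') (Ioo_subset_Icc_self hh))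
      intro x hx
      rw [uIcc_of_le ha.2.le] at hx
      have hx' : x ∈ Ioo 0 H := ⟨ha.1.trans_le hx.1, hx.2.trans_lt hh.2⟩
      rw [← hfl x hx', mul_div_cancel_left₀ _ (K.hpp x hx').ne']
      exact (hdiff x hx').hasDerivAt
    have h2 : ∫ s in a..h, lam * FA H T g ψ s / p s ≤ ∫ s in a..h, lam' * FA H T g ψ s / p s := by
      refine intervalIntegral.integral_mono_on_of_le_Ioo ha.2.le
        (ii_of_Ioo hint (Ioo_subset_Icc_self ha') (Ioo_subset_Icc_self hh))
        (ii_of_Ioo hint' (Ioo_subset_Icc_self ha') (Ioo_subset_Icc_self hh)) ?_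
      intro s hs
      have hs' : s ∈ Ioo 0 H := ⟨ha.1.trans hs.1, hs.2.trans hh.2⟩
      have := K.hpp s hs'
      have := K.FA_pos hA hs'
      gcongr
    linarith [(hA.2 a ha').1]
  have hcont : ContinuousOn (fun a => ∫ s in a..h, lam * FA H T g ψ s / p s) (uIcc 0 h) := by
    apply intervalIntegral.continuousOn_primitive_interval_left
    have h1 : IntegrableOn (fun s => lam * FA H T g ψ s / p s) (Icc 0 H) := by
      rw [integrableOn_Icc_iff_integrableOn_Ioo]; exact hint
    rw [uIcc_of_le hh.1.le]
    exact h1.mono_set (Icc_subset_Icc_right hh.2.le)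
  rw [uIcc_of_le hh.1.le] at hcont
  have hT : Tendsto (fun a => ∫ s in a..h, lam * FA H T g ψ s / p s) (𝓝[>] 0)
      (𝓝 (FF H T p g lam ψ h)) := by
    have := hcont 0 ⟨le_rfl, hh.1.le⟩
    refine this.tendsto.mono_left ?_
    rw [← nhdsWithin_Ioo_eq_nhdsGT hh.1]
    exact nhdsWithin_mono _ Ioo_subset_Icc_self
  refine le_of_tendsto hT ?_
  filter_upwards [Ioo_mem_nhdsGT hh.1] with a ha using key a ha

/-- Upper bound for admissible parameters. -/
theorem FCore.bound (K : FCore H T₀ C T p g) (hgint : IntegrableOn (fun s => 1 / g s) (Ici 0))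
    {c₂ : ℝ} (hc₂ : 0 < c₂)
    (hpub : ∀ h ∈ Ico (H / 2) H, p h ≤ c₂ * (H - h)) {ψ : ℝ → ℝ} {lam : ℝ} (hl : 0 ≤ lam)
    (hs : IsFreidlinSol H T p g lam ψ) (hpos : ∀ h ∈ Ioo 0 H, 0 < ψ h) :
    lam ≤ (∫ s in Ici 0, 1 / g s) / (T₀ / c₂ * (H / 4)) := by
  obtain ⟨M, hA, hfl⟩ := K.conv hs
  have hdiff := hs.2.2.1
  have hT₀ := K.hT₀
  have hH := K.hH
  have hgp : ∀ x, 0 ≤ x → 0 < g x := fun x hx => K.hg0.trans_le (K.hgm (by simp) hx hx)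
  have hmono : MonotoneOn ψ (Ioo 0 H) := by
    refine monotoneOn_of_deriv_nonneg (convex_Ioo _ _)
      (fun h hh => (hdiff h hh).continuousAt.continuousWithinAt)
      (fun h hh => (hdiff h (interior_subset hh)).differentiableWithinAt) ?_
    intro h hh
    have hh := interior_subset hh
    have h1 := hfl h hh
    have h2 : 0 ≤ p h * deriv ψ h := by rw [h1]; exact mul_nonneg hl (K.FA_pos hA hh).le
    exact nonneg_of_mul_nonneg_right h2 (K.hpp h hh)
  have hder : ∀ h ∈ Ico (H/2) H, lam * (T₀ / c₂) * g (ψ h) ≤ deriv ψ h := by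
    intro h hh
    have hh' : h ∈ Ioo 0 H := ⟨by linarith [hh.1], hh.2⟩
    have h1 := K.FA_ge hA hh' (hgp _ (hA.2 h hh').1).le (fun t ht => by
      have ht' : t ∈ Ioo 0 H := ⟨hh'.1.trans ht.1, ht.2⟩
      exact K.hgm (hA.2 h hh').1 (hA.2 t ht').1 (hmono hh' ht' ht.1.le))
    have h2 := hfl h hh'
    have h3 := hpub h hh
    have h4 := K.hpp h hh'
    have hg := hgp _ (hA.2 h hh').1
    have h5 : deriv ψ h = lam * FA H T g ψ h / p h := by rw [← h2]; field_simp
    rw [h5, le_div_iff₀ h4]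
    calc lam * (T₀ / c₂) * g (ψ h) * p h ≤ lam * (T₀ / c₂) * g (ψ h) * (c₂ * (H - h)) := by
          gcongr
      _ = lam * (T₀ * g (ψ h) * (H - h)) := by field_simp
      _ ≤ _ := by gcongr
  have hgi : ∀ x, 0 ≤ x → ContinuousAt (fun s => 1 / g s) x := fun x hx =>
    continuousAt_const.div K.hgc.continuousAt (hgp x hx).ne'
  let G : ℝ → ℝ := fun x => ∫ s in (0:ℝ)..x, 1 / g s
  have hii : ∀ x, 0 ≤ x → IntervalIntegrable (fun s => 1 / g s) volume 0 x := fun x hx =>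
    (hgint.mono_set (by rw [uIcc_of_le hx]; exact Icc_subset_Ici_self)).intervalIntegrable
  have hGd : ∀ x, 0 < x → HasDerivAt G (1 / g x) x := by
    intro x hx
    refine intervalIntegral.integral_hasDerivAt_right (hii x hx.le) ?_ (hgi x hx.le)
    have : ContinuousOn (fun s => 1 / g s) (Ioi 0) :=
      fun y hy => (hgi y (le_of_lt hy)).continuousWithinAt
    exact this.stronglyMeasurableAtFilter isOpen_Ioi x hx
  have hG0 : ∀ x, 0 ≤ x → 0 ≤ G x := by
    intro x hx
    refine intervalIntegral.integral_nonneg hx fun s hs => ?_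
    exact (one_div_pos.2 (hgp s hs.1)).le
  have hG1 : ∀ x, 0 ≤ x → G x ≤ ∫ s in Ici 0, 1 / g s := by
    intro x hx
    show (∫ s in (0:ℝ)..x, 1 / g s) ≤ _
    rw [intervalIntegral.integral_of_le hx]
    refine setIntegral_mono_set hgint ?_ ?_
    · filter_upwards [ae_restrict_mem measurableSet_Ici] with s hs
      exact (one_div_pos.2 (hgp s hs)).le
    · exact (Ioc_subset_Ioi_self.trans Ioi_subset_Ici_self).eventuallyLE
  have hchain : ∀ h ∈ Ioo 0 H, HasDerivAt (fun t => G (ψ t)) (1 / g (ψ h) * deriv ψ h) h :=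
    fun h hh => (hGd (ψ h) (hpos h hh)).comp h (hdiff h hh).hasDerivAt
  have hmem : ∀ h ∈ Icc (H/2) (3*H/4), h ∈ Ioo 0 H := fun h hh =>
    ⟨by linarith [hh.1], by linarith [hh.2]⟩
  have hfin := (convex_Icc (H/2) (3*H/4)).mul_sub_le_image_sub_of_le_deriv
    (f := fun t => G (ψ t)) (C := lam * (T₀ / c₂))
    (fun h hh => (hchain h (hmem h hh)).continuousAt.continuousWithinAt)
    (fun h hh => (hchain h (hmem h (interior_subset hh))).differentiableAt.differentiableWithinAt)
    (fun h hh => by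
      have hh := interior_subset hh
      rw [(hchain h (hmem h hh)).deriv, one_div_mul_eq_div,
        le_div_iff₀ (hgp _ (hpos h (hmem h hh)).le)]
      exact hder h ⟨hh.1, (hmem h hh).2⟩)
    (H/2) ⟨le_rfl, by linarith⟩ (3*H/4) ⟨by linarith, le_rfl⟩ (by linarith)
  have e1 := hG1 (ψ (3*H/4)) (hpos _ ⟨by linarith, by linarith⟩).le
  have e2 := hG0 (ψ (H/2)) (hpos _ ⟨by linarith, by linarith⟩).le
  rw [le_div_iff₀ (by positivity)]
  have : 3 * H / 4 - H / 2 = H / 4 := by ring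
  rw [this] at hfin
  linarith

end core

/-- The effective (Freidlin) explosion problem on `[0, H₀)` has a
finite positive explosion threshold `λ̄*`: for `0 ≤ λ < λ̄*` it admits a bounded
nonnegative solution (positive on `(0,H₀)` when `λ > 0`), while for `λ > λ̄*` no such
positive solution exists. -/
theorem freidlin_threshold_exists (g : ℝ → ℝ)
    (hg : ContDiff ℝ 2 g) (hg0 : 0 < g 0) (hg0' : 0 < deriv g 0)
    (hgmono : StrictMonoOn g (Ici 0)) (hgconv : ConvexOn ℝ (Ici 0) g)
    (hgint : IntegrableOn (fun s => 1 / g s) (Ici 0))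
    (H₀ : ℝ) (hH₀ : 0 < H₀)
    (T : ℝ → ℝ) (hTcont : ContinuousOn T (Ioc 0 H₀))
    (T₀ T₁ : ℝ) (hT₀ : 0 < T₀) (hT₁ : 0 < T₁)
    (hTlb : ∀ h ∈ Ioc (0 : ℝ) H₀, T₀ ≤ T h)
    (hTub : ∀ h ∈ Ioc (0 : ℝ) H₀, T h ≤ T₁ * (1 + |Real.log h|))
    (p : ℝ → ℝ) (hpcont : ContinuousOn p (Ico 0 H₀))
    (hppos : ∀ h ∈ Ico (0 : ℝ) H₀, 0 < p h)
    (c₁ c₂ : ℝ) (hc₁ : 0 < c₁) (hc₂ : 0 < c₂)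
    (hplb : ∀ h ∈ Ico (H₀ / 2) H₀, c₁ * (H₀ - h) ≤ p h)
    (hpub : ∀ h ∈ Ico (H₀ / 2) H₀, p h ≤ c₂ * (H₀ - h)) :
    ∃ lamStar : ℝ, 0 < lamStar ∧
      (∀ lam : ℝ, 0 ≤ lam → lam < lamStar →
        ∃ φ : ℝ → ℝ, IsFreidlinSol H₀ T p g lam φ ∧
          (0 < lam → ∀ h ∈ Ioo (0 : ℝ) H₀, 0 < φ h)) ∧
      (∀ lam : ℝ, lamStar < lam →
        ¬ ∃ φ : ℝ → ℝ, IsFreidlinSol H₀ T p g lam φ ∧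
          ∀ h ∈ Ioo (0 : ℝ) H₀, 0 < φ h) := by
  have hne := hH₀.ne'
  have hTint : IntegrableOn T (Ioc 0 H₀) := by
    have h1 : IntegrableOn (fun h => T₁ * (1 + |Real.log h|)) (Ioc 0 H₀) := by
      have h2 : IntervalIntegrable Real.log volume 0 H₀ := intervalIntegral.intervalIntegrable_log'
      have h3 := (intervalIntegrable_iff_integrableOn_Ioc_of_le hH₀.le).1 h2
      exact ((integrableOn_const (by simp)).add h3.abs).const_mul _
    refine Integrable.mono' h1 (hTcont.aestronglyMeasurable measurableSet_Ioc) ?_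
    filter_upwards [ae_restrict_mem measurableSet_Ioc] with t ht
    rw [Real.norm_of_nonneg (hT₀.le.trans (hTlb t ht))]
    exact hTub t ht
  have hI : IntegrableOn T (Ioo 0 H₀) := hTint.mono_set Ioo_subset_Ioc_self
  obtain ⟨C, hC0, hC⟩ : ∃ C, 0 < C ∧ ∀ s ∈ Ioo (0:ℝ) H₀, (∫ t in s..H₀, T t) ≤ C * p s := by
    obtain ⟨x, hx, hm⟩ := isCompact_Icc.exists_isMinOn (nonempty_Icc.2 (by linarith : 0 ≤ H₀/2))
      (hpcont.mono (fun y hy => ⟨hy.1, by linarith [hy.2]⟩ : Icc 0 (H₀/2) ⊆ Ico 0 H₀))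
    have hxp := hppos x ⟨hx.1, by linarith [hx.2]⟩
    obtain ⟨y, hy, hM⟩ := isCompact_Icc.exists_isMaxOn
      (nonempty_Icc.2 (by linarith : H₀/2 ≤ H₀))
      (hTcont.mono (fun y hy => ⟨by linarith [hy.1], hy.2⟩ : Icc (H₀/2) H₀ ⊆ Ioc 0 H₀))
    have hyp := hT₀.trans_le (hTlb y ⟨by linarith [hy.1], hy.2⟩)
    have hJ : 0 ≤ ∫ t in (0:ℝ)..H₀, T t := by
      rw [intervalIntegral.integral_of_le hH₀.le]
      exact setIntegral_nonneg measurableSet_Ioc fun s hs => hT₀.le.trans (hTlb s hs)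
    refine ⟨(∫ t in (0:ℝ)..H₀, T t) / p x + T y / c₁, by positivity, fun s hs => ?_⟩
    have hps := hppos s (Ioo_subset_Ico_self hs)
    have hi0 : IntervalIntegrable T volume 0 s :=
      ii_of_Ioo hI ⟨le_rfl, hH₀.le⟩ (Ioo_subset_Icc_self hs)
    have hi1 : IntervalIntegrable T volume s H₀ :=
      ii_of_Ioo hI (Ioo_subset_Icc_self hs) ⟨hH₀.le, le_rfl⟩
    rw [add_mul]
    rcases le_total s (H₀/2) with h | h
    · have h1 : p x ≤ p s := hm ⟨hs.1.le, h⟩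
      have h2 : 0 ≤ ∫ t in (0:ℝ)..s, T t := by
        rw [intervalIntegral.integral_of_le hs.1.le]
        exact setIntegral_nonneg measurableSet_Ioc fun t ht =>
          hT₀.le.trans (hTlb t ⟨ht.1, ht.2.trans hs.2.le⟩)
      have h3 := intervalIntegral.integral_add_adjacent_intervals hi0 hi1
      have h4 : (∫ t in (0:ℝ)..H₀, T t) ≤ (∫ t in (0:ℝ)..H₀, T t) / p x * p s := by
        rw [div_mul_eq_mul_div, le_div_iff₀ hxp]
        gcongr
      have h5 : 0 ≤ T y / c₁ * p s := by positivity
      linarith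
    · have h1 : (∫ t in s..H₀, T t) ≤ ∫ t in s..H₀, T y := by
        refine intervalIntegral.integral_mono_on hs.2.le hi1 (by simp) fun t ht => ?_
        exact hM ⟨h.trans ht.1, ht.2⟩
      simp only [intervalIntegral.integral_const, smul_eq_mul] at h1
      have h2 := hplb s ⟨h, hs.2⟩
      have h4 : (H₀ - s) * T y ≤ T y / c₁ * p s := by
        rw [div_mul_eq_mul_div, le_div_iff₀ hc₁]
        nlinarith
      have h5 : 0 ≤ (∫ t in (0:ℝ)..H₀, T t) / p x * p s := by positivity
      linarith
  have K : FCore H₀ T₀ C T p g :=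
    { hH := hH₀, hT₀ := hT₀, hI := hI
      hTc := hTcont.mono Ioo_subset_Ioc_self
      hTl := fun h hh => hTlb h (Ioo_subset_Ioc_self hh)
      hpc := hpcont.mono Ioo_subset_Ico_self
      hpp := fun h hh => hppos h (Ioo_subset_Ico_self hh)
      hC := hC, hgc := hg.continuous, hgm := hgmono.monotoneOn, hg0 := hg0
      hpz := by
        have h1 : Filter.Tendsto (fun h => c₂ * (H₀ - h)) (nhdsWithin H₀ (Iio H₀)) (nhds 0) := by
          have : Continuous fun h => c₂ * (H₀ - h) := by fun_prop
          have h2 := this.tendsto H₀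
          simp only [sub_self, mul_zero] at h2
          exact h2.mono_left nhdsWithin_le_nhds
        refine squeeze_zero_norm' ?_ h1
        filter_upwards [Ioo_mem_nhdsLT (by linarith : H₀/2 < H₀)] with t ht
        rw [Real.norm_of_nonneg (hppos t ⟨by linarith [ht.1], ht.2⟩).le]
        exact hpub t ⟨ht.1.le, ht.2⟩ }
  let S : Set ℝ := {lam | 0 ≤ lam ∧ ∃ φ : ℝ → ℝ, IsFreidlinSol H₀ T p g lam φ ∧
          ∀ h ∈ Ioo (0 : ℝ) H₀, 0 < φ h}
  have hbdd : BddAbove S := by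
    refine ⟨(∫ s in Ici 0, 1 / g s) / (T₀ / c₂ * (H₀ / 4)), ?_⟩
    rintro lam ⟨hl, φ, hs, hpos⟩
    exact K.bound hgint hc₂ hpub hl hs hpos
  have hA1 : FAdm H₀ 1 (fun _ => 1) :=
    ⟨aestronglyMeasurable_const, fun _ _ => ⟨zero_le_one, le_rfl⟩⟩
  have hg1 : 0 < g 1 := K.gM hA1
  let l0 : ℝ := 1 / (g 1 * C * H₀)
  have hl0 : 0 < l0 := by positivity
  have hl0S : l0 ∈ S := by
    obtain ⟨f, hf, hfix⟩ := K.fixed hA1 hl0.le (fun h hh => by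
      have h1 : FF H₀ T p g l0 (fun _ => 1) h ≤ ∫ s in (0:ℝ)..h, l0 * (g 1 * C) := by
        refine intervalIntegral.integral_mono_on_of_le_Ioo hh.1.le
          (ii_of_Ioo (K.K_int hA1 hl0.le) ⟨le_rfl, hH₀.le⟩ (Ioo_subset_Icc_self hh)) (by simp) ?_
        exact fun s hs => K.K_le hA1 hl0.le ⟨hs.1, hs.2.trans hh.2⟩
      refine h1.trans ?_
      simp only [intervalIntegral.integral_const, smul_eq_mul, sub_zero]
      have h2 : H₀ * (l0 * (g 1 * C)) = 1 := by
        simp only [l0]; field_simp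
      have h3 : 0 < l0 * (g 1 * C) := by positivity
      nlinarith [hh.2])
    obtain ⟨h1, h2⟩ := K.sol hf hl0.le hfix
    exact ⟨hl0.le, _, h1, h2 hl0⟩
  refine ⟨sSup S, hl0.trans_le (le_csSup hbdd hl0S), ?_, ?_⟩
  · intro lam hl hlt
    obtain ⟨lam', ⟨_, ψ, hs, _⟩, hlt'⟩ := exists_lt_of_lt_csSup ⟨l0, hl0S⟩ hlt
    obtain ⟨M, hA, hsup⟩ := K.super hl hlt'.le hs
    obtain ⟨f, hf, hfix⟩ := K.fixed hA hl hsup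
    exact ⟨_, K.sol hf hl hfix⟩
  · rintro lam hlt ⟨φ, hs, hpos⟩
    have : lam ∈ S :=
      ⟨((hl0.trans_le (le_csSup hbdd hl0S)).trans hlt).le, φ, hs, hpos⟩
    exact absurd (le_csSup hbdd this) (not_le.2 hlt)
end
end

section
/- Let B = B(0,1) ⊂ ℝ² be the open unit disc. For every n ≥ 1 and every μ ∈ ℝ, if φ is a C² function on B, continuous on the closed disc, positive in B, vanishing on the circle |x| = 1, and satisfying −Δφ(x) + 4n ⟨x, ∇φ(x)⟩ = μ φ(x) for all x ∈ B, then μ > 0; moreover there exist constants C > 0 and c > 0, independent of n, such that μ ≤ C e^{−c n}. In particular the principal eigenvalue μ_n of the operator −Δ + 4n x·∇ on B with Dirichlet boundary conditions tends to 0 as n → ∞. -/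
open Set MeasureTheory
open scoped RealInnerProductSpace

noncomputable section

/-- The Laplacian of a real-valued function on Euclidean space, computed as the sum of
the second partial derivatives in the coordinate directions. -/
def lapl {n : ℕ} (φ : EuclideanSpace ℝ (Fin n) → ℝ) (x : EuclideanSpace ℝ (Fin n)) : ℝ :=
  ∑ i : Fin n, fderiv ℝ (fun y => fderiv ℝ φ y (EuclideanSpace.single i 1)) x
    (EuclideanSpace.single i 1)

abbrev E2 := EuclideanSpace ℝ (Fin 2)

lemma second_deriv_nonpos (g g' : ℝ → ℝ) (g'' : ℝ) (h : IsLocalMax g 0)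
    (h1 : ∀ᶠ t in nhds 0, HasDerivAt g (g' t) t) (h2 : HasDerivAt g' g'' 0) : g'' ≤ 0 := by
  by_contra hpos
  push Not at hpos
  have he : deriv g =ᶠ[nhds 0] g' := h1.mono fun t ht => ht.deriv
  have hdd : deriv (deriv g) 0 = g'' := by rw [he.deriv_eq]; exact h2.deriv
  have hmin : IsLocalMin g 0 :=
    isLocalMin_of_deriv_deriv_pos (by rw [hdd]; exact hpos) h.deriv_eq_zero
      h1.self_of_nhds.continuousAt
  have hc : g =ᶠ[nhds 0] fun _ => g 0 := by
    filter_upwards [h, hmin] with t ha hb using le_antisymm ha hb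
  have hd : deriv g =ᶠ[nhds 0] fun _ => 0 := by
    filter_upwards [hc.eventually_nhds] with t ht
    rw [Filter.EventuallyEq.deriv_eq (show g =ᶠ[nhds t] fun _ => g 0 from ht)]
    simp
  rw [hd.deriv_eq] at hdd
  simp at hdd
  linarith

lemma lineDeriv_nonpos (f : E2 → ℝ) (x v : E2) (h : IsLocalMax f x)
    (hf : ContDiffAt ℝ 2 f x) : fderiv ℝ (fun y => fderiv ℝ f y v) x v ≤ 0 := by
  have hline : ∀ t : ℝ, HasDerivAt (fun t : ℝ => x + t • v) v t := fun t => by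
    simpa using ((hasDerivAt_id t).smul_const v).const_add x
  have hcont : Filter.Tendsto (fun t : ℝ => x + t • v) (nhds 0) (nhds x) := by
    simpa using (hline 0).continuousAt.tendsto
  refine second_deriv_nonpos (fun t => f (x + t • v)) (fun t => fderiv ℝ f (x + t • v) v) _
    ?_ ?_ ?_
  · have := hcont.eventually h
    filter_upwards [this] with t ht
    simpa using ht
  · have hd : ∀ᶠ y in nhds x, DifferentiableAt ℝ f y := by
      filter_upwards [hf.eventually (by simp)] with y hy using hy.differentiableAt (by simp)
    filter_upwards [hcont.eventually hd] with t ht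
    exact ht.hasFDerivAt.comp_hasDerivAt t (hline t)
  · have hd : DifferentiableAt ℝ (fun y => fderiv ℝ f y v) x := by
      have : DifferentiableAt ℝ (fderiv ℝ f) x :=
        (hf.fderiv_right (m := 1) (by norm_num)).differentiableAt (by simp)
      exact this.clm_apply (differentiableAt_const v)
    have h0 : HasFDerivAt (fun y => fderiv ℝ f y v) (fderiv ℝ (fun y => fderiv ℝ f y v) x)
        (x + (0:ℝ) • v) := by simpa using hd.hasFDerivAt
    exact h0.comp_hasDerivAt 0 (hline 0)

lemma lapl_nonpos (f : E2 → ℝ) (x : E2) (h : IsLocalMax f x)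
    (hf : ContDiffAt ℝ 2 f x) : lapl f x ≤ 0 :=
  Finset.sum_nonpos fun i _ => lineDeriv_nonpos f x _ h hf

def gE (a : ℝ) (x : E2) : ℝ := Real.exp (a * ‖x‖ ^ 2)

lemma gE_contDiff (a : ℝ) : ContDiff ℝ 2 (gE a) := by
  unfold gE
  exact Real.contDiff_exp.comp (contDiff_const.mul (contDiff_norm_sq ℝ))

lemma gE_fderiv (a : ℝ) (x v : E2) : fderiv ℝ (gE a) x v = gE a x * (2 * a * ⟪x, v⟫) := by
  have := (((hasStrictFDerivAt_norm_sq x).hasFDerivAt.const_mul a).exp)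
  have h2 : HasFDerivAt (gE a) _ x := this
  rw [h2.fderiv]
  simp [gE]
  ring

lemma gE_snd (a : ℝ) (x v : E2) : fderiv ℝ (fun y => fderiv ℝ (gE a) y v) x v
    = gE a x * (4 * a ^ 2 * ⟪x, v⟫ ^ 2 + 2 * a * ⟪v, v⟫) := by
  simp_rw [gE_fderiv]
  have h1 : HasFDerivAt (gE a) (fderiv ℝ (gE a) x) x :=
    ((gE_contDiff a).differentiable (by simp) x).hasFDerivAt
  have h2 : HasFDerivAt (fun y : E2 => ⟪y, v⟫) (innerSL ℝ v) x := by
    have := (innerSL ℝ v).hasFDerivAt (x := x)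
    refine this.congr_of_eventuallyEq (Filter.Eventually.of_forall fun y => ?_)
    simp [real_inner_comm]
  have h3 := h1.fun_mul (h2.const_mul (2 * a))
  rw [h3.fderiv]
  simp [gE_fderiv]
  ring

lemma gE_lapl (a : ℝ) (x : E2) : lapl (gE a) x = gE a x * (4 * a ^ 2 * ‖x‖ ^ 2 + 4 * a) := by
  unfold lapl
  simp_rw [gE_snd]
  simp [EuclideanSpace.norm_sq_eq, EuclideanSpace.inner_single_right]
  ring

lemma lapl_lin (f g : E2 → ℝ) (k l : ℝ) (x : E2) (hf : ContDiffAt ℝ 2 f x)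
    (hg : ContDiffAt ℝ 2 g x) :
    lapl (fun y => k * f y + l * g y) x = k * lapl f x + l * lapl g x := by
  unfold lapl
  rw [Finset.mul_sum, Finset.mul_sum, ← Finset.sum_add_distrib]
  refine Finset.sum_congr rfl fun i _ => ?_
  set v : E2 := EuclideanSpace.single i 1
  have hd : ∀ f : E2 → ℝ, ContDiffAt ℝ 2 f x → ∀ᶠ y in nhds x, DifferentiableAt ℝ f y := by
    intro f hf
    filter_upwards [hf.eventually (by simp)] with y hy using hy.differentiableAt (by simp)
  have hs : ∀ f : E2 → ℝ, ContDiffAt ℝ 2 f x →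
      DifferentiableAt ℝ (fun y => fderiv ℝ f y v) x := by
    intro f hf
    have : DifferentiableAt ℝ (fderiv ℝ f) x :=
      (hf.fderiv_right (m := 1) (by norm_num)).differentiableAt (by simp)
    exact this.clm_apply (differentiableAt_const v)
  have he : (fun y => fderiv ℝ (fun y => k * f y + l * g y) y v) =ᶠ[nhds x]
      fun y => k * fderiv ℝ f y v + l * fderiv ℝ g y v := by
    filter_upwards [hd f hf, hd g hg] with y h1 h2
    rw [((h1.hasFDerivAt.const_mul k).fun_add (h2.hasFDerivAt.const_mul l)).fderiv]
    simp
  rw [he.fderiv_eq, (((hs f hf).hasFDerivAt.const_mul k).fun_add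
    ((hs g hg).hasFDerivAt.const_mul l)).fderiv]
  simp

lemma key (n μ a k l : ℝ) (φ : E2 → ℝ) (x : E2) (hφ : ContDiffAt ℝ 2 φ x)
    (heq : -lapl φ x + 4 * n * ⟪x, gradient φ x⟫ = μ * φ x)
    (hmax : IsLocalMax (fun y => k * gE a y + l * φ y) x) :
    0 ≤ k * (-4 * a * gE a x * (1 + (a - 2 * n) * ‖x‖ ^ 2)) + l * (μ * φ x) := by
  have hg := (gE_contDiff a).contDiffAt (x := x)
  have h1 := lapl_nonpos _ _ hmax ((contDiffAt_const.mul hg).add (contDiffAt_const.mul hφ))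
  rw [lapl_lin _ _ _ _ _ hg hφ, gE_lapl] at h1
  have h2 := hmax.fderiv_eq_zero
  rw [(((hg.differentiableAt (by simp)).hasFDerivAt.const_mul k).fun_add
    ((hφ.differentiableAt (by simp)).hasFDerivAt.const_mul l)).fderiv] at h2
  have h3 := DFunLike.congr_fun h2 x
  simp only [ContinuousLinearMap.add_apply, ContinuousLinearMap.smul_apply, gE_fderiv,
    smul_eq_mul, real_inner_self_eq_norm_sq, ContinuousLinearMap.zero_apply] at h3
  have h4 : ⟪x, gradient φ x⟫ = fderiv ℝ φ x x := by
    rw [real_inner_comm, gradient, InnerProductSpace.toDual_symm_apply]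
  rw [h4] at heq
  rw [← heq]
  linear_combination h1 + (-4) * n * h3

theorem radial_flow_eigenvalue_decay :
    ∃ C : ℝ, 0 < C ∧ ∃ c : ℝ, 0 < c ∧
      ∀ n : ℕ, 1 ≤ n → ∀ μ : ℝ, ∀ φ : EuclideanSpace ℝ (Fin 2) → ℝ,
        ContDiffOn ℝ 2 φ (Metric.ball (0 : EuclideanSpace ℝ (Fin 2)) 1) →
        ContinuousOn φ (Metric.closedBall (0 : EuclideanSpace ℝ (Fin 2)) 1) →
        (∀ x ∈ Metric.ball (0 : EuclideanSpace ℝ (Fin 2)) 1, 0 < φ x) →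
        (∀ x : EuclideanSpace ℝ (Fin 2), ‖x‖ = 1 → φ x = 0) →
        (∀ x ∈ Metric.ball (0 : EuclideanSpace ℝ (Fin 2)) 1,
          -lapl φ x + 4 * (n : ℝ) * ⟪x, gradient φ x⟫ = μ * φ x) →
        0 < μ ∧ μ ≤ C * Real.exp (-c * n) := by
  refine ⟨320, by norm_num, 1/5, by norm_num, ?_⟩
  intro n hn μ φ hC2 hcont hpos hbd heq
  have hn1 : (1:ℝ) ≤ n := by exact_mod_cast hn
  have hat : ∀ x ∈ Metric.ball (0 : E2) 1, ContDiffAt ℝ 2 φ x := fun x hx =>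
    hC2.contDiffAt (Metric.isOpen_ball.mem_nhds hx)
  have h0 : (0 : E2) ∈ Metric.ball (0 : E2) 1 := by simp
  have hφ0 := hpos 0 h0
  have hg0 : ∀ a, gE a 0 = 1 := fun a => by simp [gE]
  have hgpos : ∀ a x, 0 < gE a x := fun a x => Real.exp_pos _
  have hμ : 0 < μ := by
    by_contra hμ
    push Not at hμ
    set ε : ℝ := φ 0 / Real.exp (2 * n) with hε
    have hεpos : 0 < ε := by positivity
    obtain ⟨x, hx, hmax⟩ := (isCompact_closedBall (0 : E2) 1).exists_isMaxOn
      ⟨0, by simp⟩ ((((gE_contDiff (2 * n)).continuous.const_mul ε).continuousOn).add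
        (hcont.const_mul 1))
    have hx1 : ‖x‖ ≤ 1 := by simpa using hx
    rcases hx1.lt_or_eq with hlt | he
    · have hxb : x ∈ Metric.ball (0 : E2) 1 := by simpa using hlt
      have hloc := hmax.isLocalMax
        (Filter.mem_of_superset (Metric.isOpen_ball.mem_nhds hxb) Metric.ball_subset_closedBall)
      have := key n μ (2 * n) ε 1 φ x (hat x hxb) (heq x hxb) hloc
      have h1 : 0 < ε * (n * gE (2 * n) x) := by
        have := hgpos (2 * n) x
        positivity
      have h2 := mul_nonneg (neg_nonneg.2 hμ) (hpos x hxb).le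
      nlinarith
    · have := hmax (show (0 : E2) ∈ Metric.closedBall (0 : E2) 1 by simp)
      simp only [Set.mem_ofPred_eq, Pi.add_apply, hg0, hbd x he] at this
      have h3 : ε * gE (2 * n) x = φ 0 := by
        rw [hε]; simp only [gE, he]; field_simp
      linarith
  refine ⟨hμ, ?_⟩
  set a : ℝ := n / 2 with ha
  set δ : ℝ := Real.exp (-(2/5) * n) with hδ
  have hδpos : 0 < δ := Real.exp_pos _
  have hsub : Metric.closedBall (0 : E2) (Real.sqrt (4/5)) ⊆ Metric.ball (0 : E2) 1 :=
    Metric.closedBall_subset_ball (by rw [Real.sqrt_lt' one_pos]; norm_num)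
  obtain ⟨x, hx, hmax⟩ := (isCompact_closedBall (0 : E2) (Real.sqrt (4/5))).exists_isMaxOn
      (f := fun y => (1 - δ * gE a y) / φ y)
      ⟨0, Metric.mem_closedBall_self (Real.sqrt_nonneg _)⟩ (ContinuousOn.div
        (continuous_const.sub ((gE_contDiff a).continuous.const_mul δ)).continuousOn
        (hcont.mono (hsub.trans Metric.ball_subset_closedBall))
        (fun y hy => (hpos y (hsub hy)).ne'))
  have hxb := hsub hx
  have hφx := hpos x hxb
  set t : ℝ := (1 - δ * gE a x) / φ x with ht
  have htpos : 0 < t := by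
    have h1 := hmax (show (0 : E2) ∈ Metric.closedBall (0 : E2) (Real.sqrt (4/5)) from
      Metric.mem_closedBall_self (Real.sqrt_nonneg _))
    simp only [Set.mem_ofPred_eq, hg0] at h1
    refine lt_of_lt_of_le (div_pos ?_ hφ0) h1
    have : δ < 1 := by rw [hδ, Real.exp_lt_one_iff]; linarith
    linarith
  have hwx : 1 - δ * gE a x = t * φ x := by rw [ht]; field_simp
  have hw : 0 < 1 - δ * gE a x := by rw [hwx]; positivity
  have hprod : δ * gE a x = Real.exp (n * (‖x‖ ^ 2 / 2 - 2 / 5)) := by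
    rw [hδ, gE, ← Real.exp_add]; congr 1; rw [ha]; ring
  have hxs : ‖x‖ ^ 2 < 4 / 5 := by
    have h1 : Real.exp (n * (‖x‖ ^ 2 / 2 - 2 / 5)) < 1 := by linarith
    rw [Real.exp_lt_one_iff] at h1
    nlinarith
  have hxball : x ∈ Metric.ball (0 : E2) (Real.sqrt (4/5)) := by
    rw [mem_ball_zero_iff]; exact Real.lt_sqrt_of_sq_lt hxs
  have hloc : IsLocalMax (fun y => (-δ) * gE a y + (-t) * φ y) x := by
    filter_upwards [Metric.isOpen_ball.mem_nhds hxball] with y hy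
    have hy' := Metric.ball_subset_closedBall hy
    have h1 := hmax hy'
    simp only [Set.mem_ofPred_eq] at h1
    rw [← ht, div_le_iff₀ (hpos y (hsub hy'))] at h1
    linarith
  have hk := key n μ a (-δ) (-t) φ x (hat x hxb) (heq x hxb) hloc
  have hk2 : μ * (1 - δ * gE a x) ≤ 2 * n * (δ * gE a x) * (1 - 3 * n / 2 * ‖x‖ ^ 2) := by
    rw [hwx]
    rw [ha] at hk ⊢
    linarith
  have hg' : 0 < δ * gE a x := mul_pos hδpos (hgpos _ _)
  have hs : 3 * n / 2 * ‖x‖ ^ 2 < 1 := by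
    by_contra hcon
    push Not at hcon
    have h1 : 0 < μ * (1 - δ * gE a x) := mul_pos hμ hw
    have h2 : 0 ≤ 2 * n * (δ * gE a x) * (3 * n / 2 * ‖x‖ ^ 2 - 1) :=
      mul_nonneg (by positivity) (by linarith)
    linarith
  have hP : δ * gE a x ≤ Real.exp (1/3 - 2/5 * n) := by
    rw [hprod, Real.exp_le_exp]; linarith
  have hP2 : Real.exp (1/3 - 2/5 * n) ≤ 15/16 := by
    have h1 : Real.exp (1/3 - 2/5 * n) ≤ Real.exp (-(1/15)) := by
      rw [Real.exp_le_exp]; linarith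
    have h2 : (1/15:ℝ) + 1 ≤ Real.exp (1/15) := Real.add_one_le_exp _
    rw [Real.exp_neg] at h1
    refine h1.trans ?_
    rw [inv_le_comm₀ (Real.exp_pos _) (by norm_num)]
    linarith
  have hA : μ * (1/16) ≤ 2 * n * Real.exp (1/3 - 2/5 * n) := by
    calc μ * (1/16) ≤ μ * (1 - δ * gE a x) := by gcongr; linarith
      _ ≤ _ := hk2
      _ ≤ 2 * n * (δ * gE a x) * 1 := by
        gcongr
        have : 0 ≤ 3 * n / 2 * ‖x‖ ^ 2 := by positivity
        linarith
      _ ≤ _ := by rw [mul_one]; gcongr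
  -- final numeric estimate
  have hsplit : Real.exp (1/3 - 2/5 * n) = Real.exp (1/3 - n / 5) * Real.exp (-(1/5) * n) := by
    rw [← Real.exp_add]; congr 1; ring
  have hB : n * Real.exp (1/3 - n / 5) ≤ 10 := by
    have h1 : (n / 5 - 1/3 : ℝ) + 1 ≤ Real.exp (n / 5 - 1/3) := Real.add_one_le_exp _
    have h2 : Real.exp (1/3 - n/5 : ℝ) = (Real.exp (n / 5 - 1/3))⁻¹ := by
      rw [← Real.exp_neg]; congr 1; ring
    rw [h2, ← div_eq_mul_inv, div_le_iff₀ (Real.exp_pos _)]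
    linarith
  have hC : 2 * n * Real.exp (1/3 - 2/5 * n) ≤ 20 * Real.exp (-(1/5) * n) := by
    rw [hsplit]
    have := mul_le_mul_of_nonneg_right hB (Real.exp_pos (-(1/5) * n : ℝ)).le
    linarith
  linarith
end
end
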